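/- arXiv:2203.13837 — 2 statements merged into one kernel-verified Lean document; each statement's English description precedes it below -/
import Mathlib

section
/- Let J be a symmetric positive definite real n×n matrix. Let U₁ be a real n×k₁ matrix and U₂ a real n×k₂ matrix, each with linearly independent columns, such that the column span of U₂ is contained in the column span of U₁. Then U₁ᵀ J U₁ and U₂ᵀ J U₂ are invertible, and U₁ (U₁ᵀ J U₁)⁻¹ U₁ᵀ − U₂ (U₂ᵀ J U₂)⁻¹ U₂ᵀ is positive semidefinite. In words: adding constraints (shrinking the tangent space from the span of U₁ to the span of U₂) decreases the constrained Cramér–Rao lower bound in the positive semidefinite order. -/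
/-!
Write `Pᵢ = Uᵢ (Uᵢᵀ J Uᵢ)⁻¹ Uᵢᵀ`, so that `Pᵢ J` is the `J`-orthogonal projection onto the column
span of `Uᵢ` and in particular `Pᵢ J Uᵢ = Uᵢ`. Since the span of `U₂` lies in that of `U₁`, there
is `C` with `U₂ = U₁ C`, whence `P₁ J P₂ = P₂` and, transposing, `P₂ J P₁ = P₂`. The difference
`D = P₁ - P₂` is therefore symmetric and satisfies `D J D = P₁ - P₂ - P₂ + P₂ = D`, so
`D = Dᵀ J D` is positive semidefinite because `J` is.
-/

open Matrix

/-- The constrained information matrix is positive definite, hence invertible. -/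
lemma posDef_transpose_mul_mul {n k : ℕ} {J : Matrix (Fin n) (Fin n) ℝ} (hJ : J.PosDef)
    {U : Matrix (Fin n) (Fin k) ℝ}
    (hU : LinearIndependent ℝ (fun j : Fin k => fun i : Fin n => U i j)) :
    (Uᵀ * J * U).PosDef := by
  have h := hJ.conjTranspose_mul_mul_same (mulVec_injective_iff.mpr hU)
  rwa [conjTranspose_eq_transpose_of_trivial] at h

/-- The coefficients of the columns of `U₂` in terms of those of `U₁` form a factor `C`. -/
lemma exists_eq_mul_of_span_le {n k₁ k₂ : ℕ}
    {U₁ : Matrix (Fin n) (Fin k₁) ℝ} {U₂ : Matrix (Fin n) (Fin k₂) ℝ}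
    (hspan : Submodule.span ℝ (Set.range (fun j : Fin k₂ => fun i : Fin n => U₂ i j))
        ≤ Submodule.span ℝ (Set.range (fun j : Fin k₁ => fun i : Fin n => U₁ i j))) :
    ∃ C : Matrix (Fin k₁) (Fin k₂) ℝ, U₂ = U₁ * C := by
  have h (j : Fin k₂) : ∃ c : Fin k₁ → ℝ, ∑ l, c l • (fun i => U₁ i l) = fun i => U₂ i j :=
    (Submodule.mem_span_range_iff_exists_fun ℝ).mp (hspan (Submodule.subset_span ⟨j, rfl⟩))
  choose c hc using h
  refine ⟨Matrix.of fun l j => c j l, ?_⟩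
  ext i j
  simpa [mul_apply, mul_comm] using (congrFun (hc j) i).symm

/-- The constrained bound `U (Uᵀ J U)⁻¹ Uᵀ` is symmetric. -/
lemma transpose_bound {n k : ℕ} {J : Matrix (Fin n) (Fin n) ℝ} (hJ : Jᵀ = J)
    (U : Matrix (Fin n) (Fin k) ℝ) :
    (U * (Uᵀ * J * U)⁻¹ * Uᵀ)ᵀ = U * (Uᵀ * J * U)⁻¹ * Uᵀ := by
  simp [transpose_nonsing_inv, hJ, Matrix.mul_assoc]

/-- Monotonicity of the constrained Cramér–Rao lower bound: if `J ≻ 0` and the column span of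
`U₂` is contained in the column span of `U₁` (both with linearly independent columns), then
`U₁ᵀ J U₁` and `U₂ᵀ J U₂` are invertible and
`U₁ (U₁ᵀ J U₁)⁻¹ U₁ᵀ − U₂ (U₂ᵀ J U₂)⁻¹ U₂ᵀ` is positive semidefinite. -/
theorem crlb_monotone {n k₁ k₂ : ℕ}
    (J : Matrix (Fin n) (Fin n) ℝ) (hJ : J.PosDef)
    (U₁ : Matrix (Fin n) (Fin k₁) ℝ) (U₂ : Matrix (Fin n) (Fin k₂) ℝ)
    (hU₁ : LinearIndependent ℝ (fun j : Fin k₁ => fun i : Fin n => U₁ i j))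
    (hU₂ : LinearIndependent ℝ (fun j : Fin k₂ => fun i : Fin n => U₂ i j))
    (hspan : Submodule.span ℝ (Set.range (fun j : Fin k₂ => fun i : Fin n => U₂ i j))
        ≤ Submodule.span ℝ (Set.range (fun j : Fin k₁ => fun i : Fin n => U₁ i j))) :
    IsUnit (U₁.transpose * J * U₁) ∧ IsUnit (U₂.transpose * J * U₂) ∧
    (U₁ * (U₁.transpose * J * U₁)⁻¹ * U₁.transpose
      - U₂ * (U₂.transpose * J * U₂)⁻¹ * U₂.transpose).PosSemidef := by
  have hA₁ := (posDef_transpose_mul_mul hJ hU₁).isUnit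
  have hA₂ := (posDef_transpose_mul_mul hJ hU₂).isUnit
  refine ⟨hA₁, hA₂, ?_⟩
  have hJt : Jᵀ = J := by
    simpa [conjTranspose_eq_transpose_of_trivial] using hJ.isHermitian.eq
  have ht₁ := transpose_bound hJt U₁
  have ht₂ := transpose_bound hJt U₂
  have hfix₁ : U₁ * (U₁ᵀ * J * U₁)⁻¹ * U₁ᵀ * J * U₁ = U₁ := by
    have h := nonsing_inv_mul _ ((isUnit_iff_isUnit_det _).mp hA₁)
    simpa [Matrix.mul_assoc] using congrArg (U₁ * ·) h
  have hfix₂ : U₂ * (U₂ᵀ * J * U₂)⁻¹ * U₂ᵀ * J * U₂ = U₂ := by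
    have h := nonsing_inv_mul _ ((isUnit_iff_isUnit_det _).mp hA₂)
    simpa [Matrix.mul_assoc] using congrArg (U₂ * ·) h
  obtain ⟨C, hC⟩ := exists_eq_mul_of_span_le hspan
  have hfix₁₂ : U₁ * (U₁ᵀ * J * U₁)⁻¹ * U₁ᵀ * J * U₂ = U₂ := by
    rw [hC, ← Matrix.mul_assoc, hfix₁]
  have hmul {k : ℕ} {P : Matrix (Fin n) (Fin n) ℝ} {U : Matrix (Fin n) (Fin k) ℝ}
      (h : P * J * U = U) (B : Matrix (Fin k) (Fin k) ℝ) :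
      P * J * (U * B * Uᵀ) = U * B * Uᵀ := by
    rw [← Matrix.mul_assoc, ← Matrix.mul_assoc, h]
  have h₁₁ := hmul hfix₁ (U₁ᵀ * J * U₁)⁻¹
  have h₂₂ := hmul hfix₂ (U₂ᵀ * J * U₂)⁻¹
  have h₁₂ := hmul hfix₁₂ (U₂ᵀ * J * U₂)⁻¹
  generalize U₁ * (U₁ᵀ * J * U₁)⁻¹ * U₁ᵀ = P₁ at *
  generalize U₂ * (U₂ᵀ * J * U₂)⁻¹ * U₂ᵀ = P₂ at *
  have h₂₁ : P₂ * J * P₁ = P₂ := by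
    simpa [ht₁, ht₂, hJt, Matrix.mul_assoc] using congrArg transpose h₁₂
  have hD : (P₁ - P₂)ᴴ * J * (P₁ - P₂) = P₁ - P₂ := by
    rw [conjTranspose_eq_transpose_of_trivial, transpose_sub, ht₁, ht₂, Matrix.sub_mul,
      Matrix.sub_mul, Matrix.mul_sub, Matrix.mul_sub, h₁₁, h₁₂, h₂₁, h₂₂]
    abel
  rw [← hD]
  exact hJ.posSemidef.conjTranspose_mul_mul_same _
end

section
/- Let B be a symmetric positive semidefinite real N×N matrix, A a real M×N matrix, and ζ > 0, γ > 0. Then the stabilized KKT block matrix [[B + ζ I_N, Aᵀ], [A, −γ I_M]] is invertible (even when A does not have full row rank). -/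
open Matrix

/-- The stabilized KKT block matrix `[[B + ζ I, Aᵀ], [A, −γ I]]` is invertible for any
positive semidefinite `B` and any `A`, whenever `ζ > 0` and `γ > 0`. -/
theorem stabilized_kkt_invertible {M N : ℕ}
    (B : Matrix (Fin N) (Fin N) ℝ) (hB : B.PosSemidef)
    (A : Matrix (Fin M) (Fin N) ℝ)
    (ζ γ : ℝ) (hζ : 0 < ζ) (hγ : 0 < γ) :
    IsUnit (Matrix.fromBlocks (B + ζ • (1 : Matrix (Fin N) (Fin N) ℝ)) A.transpose
      A (-(γ • (1 : Matrix (Fin M) (Fin M) ℝ)))) := by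
  -- The lower right block has inverse `-γ⁻¹ I`, so it suffices that its Schur complement
  -- `B + ζ I + γ⁻¹ Aᵀ A` is invertible; that matrix is positive definite.
  letI : Invertible (-(γ • (1 : Matrix (Fin M) (Fin M) ℝ))) :=
    ⟨-(γ⁻¹ • 1), by simp [smul_smul, hγ.ne'], by simp [smul_smul, hγ.ne']⟩
  rw [isUnit_fromBlocks_iff_of_invertible₂₂]
  have hinv : ⅟(-(γ • (1 : Matrix (Fin M) (Fin M) ℝ))) = -(γ⁻¹ • 1) := rfl
  have hA : (γ⁻¹ • (Aᵀ * A)).PosSemidef := by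
    simpa using (posSemidef_conjTranspose_mul_self A).smul (inv_nonneg.mpr hγ.le)
  have hpos : (B + ζ • (1 : Matrix (Fin N) (Fin N) ℝ) + γ⁻¹ • (Aᵀ * A)).PosDef :=
    (PosDef.posSemidef_add hB (PosDef.one.smul hζ)).add_posSemidef hA
  simpa [hinv] using hpos.isUnit
end
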